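/- arXiv:2411.19516 — 2 statements merged into one kernel-verified Lean document; each statement's English description precedes it below -/
import Mathlib

section
/- Let A ∈ ℝ^{m×2} be a matrix with two columns that has no elimination ordering. Then there exists b ∈ ℝ^m such that the solution graph of the integer linear system (A,b) over D = {0,...,d} is not connected. -/
open Finset

/-- A matrix can be eliminated at column `j` if either every row with a positive
entry in column `j` vanishes outside column `j`, or every row with a negative
entry in column `j` vanishes outside column `j`. -/
def CanElim {m : ℕ} {ι : Type} (A : Matrix (Fin m) ι ℝ) (j : ι) : Prop :=
  (∀ i, 0 < A i j → ∀ j', j' ≠ j → A i j' = 0) ∨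
  (∀ i, A i j < 0 → ∀ j', j' ≠ j → A i j' = 0)

/-- The matrix obtained from `A` by zeroing out the columns in `J`. -/
def elimCols {m n : ℕ} (A : Matrix (Fin m) (Fin n) ℝ) (J : Finset (Fin n)) :
    Matrix (Fin m) (Fin n) ℝ :=
  fun i j => if j ∈ J then 0 else A i j

/-- `A` has an elimination ordering: an enumeration `σ 0, σ 1, …` of the columns such
that at each step, the matrix with the previously processed columns zeroed out can be
eliminated at the next column. -/
def HasEO {m n : ℕ} (A : Matrix (Fin m) (Fin n) ℝ) : Prop :=
  ∃ σ : Equiv.Perm (Fin n), ∀ t : Fin n,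
    CanElim (elimCols A ((Finset.univ.filter (fun t' => t' < t)).image σ)) (σ t)

/-- `x` has all coordinates in `D = {0,…,d}`. -/
def InD (d : ℕ) {ι : Type} (x : ι → ℤ) : Prop := ∀ j, 0 ≤ x j ∧ x j ≤ (d : ℤ)

/-- `x ∈ D^ι` is a feasible solution of the integer linear system `(A, b)`. -/
def Feas (d : ℕ) {m : ℕ} {ι : Type} [Fintype ι] (A : Matrix (Fin m) ι ℝ)
    (b : Fin m → ℝ) (x : ι → ℤ) : Prop :=
  InD d x ∧ ∀ i, b i ≤ ∑ j, A i j * (x j : ℝ)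

/-- Adjacency in the solution graph: both endpoints feasible and Hamming distance 1. -/
def SolStep (d : ℕ) {m : ℕ} {ι : Type} [Fintype ι] [DecidableEq ι]
    (A : Matrix (Fin m) ι ℝ) (b : Fin m → ℝ) (u v : ι → ℤ) : Prop :=
  Feas d A b u ∧ Feas d A b v ∧ hammingDist u v = 1

/-- The solution graph of `(A, b)` is connected. -/
def SolConnected (d : ℕ) {m : ℕ} {ι : Type} [Fintype ι] [DecidableEq ι]
    (A : Matrix (Fin m) ι ℝ) (b : Fin m → ℝ) : Prop :=
  ∀ x y, Feas d A b x → Feas d A b y → Relation.ReflTransGen (SolStep d A b) x y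

/-!
If neither column can be eliminated, some two rows `p`, `q` have nonzero entries of opposite signs
in both columns, so over the unit square `{0,1}²` they attain their minima only at opposite corners
`w` and `z`. Let `b` be the largest right-hand side for which the other two corners are feasible.
Row `p` then excludes the quadrant with apex `w` pointing away from the square, and row `q` the one
with apex `z`. Every solution with `x 0 ≤ 0` and every solution with `x 0 ≥ 1` therefore lie on
different sides in column `1` as well, and no single-coordinate change leads from one to the other.
-/

theorem eq_of_hammingDist_eq_one {ι : Type*} {β : ι → Type*} [Fintype ι] [∀ i, DecidableEq (β i)]
    {u v : ∀ i, β i} (h : hammingDist u v = 1) {j k : ι} (hk : u k ≠ v k) (hjk : j ≠ k) :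
    u j = v j := by
  by_contra hj
  exact hjk (card_le_one.mp h.le j (by simpa using hj) k (by simpa using hk))

section Elimination

variable {m n : ℕ}

theorem elimCols_empty (A : Matrix (Fin m) (Fin n) ℝ) : elimCols A ∅ = A := by
  ext i j
  simp [elimCols]

theorem canElim_elimCols_of_forall_ne_mem (A : Matrix (Fin m) (Fin n) ℝ) {J : Finset (Fin n)}
    {k : Fin n} (hJ : ∀ j, j ≠ k → j ∈ J) : CanElim (elimCols A J) k :=
  .inl fun _ _ j hj => if_pos (hJ j hj)

theorem not_canElim_iff {ι : Type} {A : Matrix (Fin m) ι ℝ} {k : ι} :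
    ¬ CanElim A k ↔ (∃ i, 0 < A i k ∧ ∃ j ≠ k, A i j ≠ 0) ∧
      ∃ i, A i k < 0 ∧ ∃ j ≠ k, A i j ≠ 0 := by
  simp only [CanElim, not_or, not_forall, exists_prop, ne_eq]

theorem hasEO_of_canElim {A : Matrix (Fin m) (Fin 2) ℝ} {k : Fin 2} (hk : CanElim A k) :
    HasEO A := by
  refine ⟨Equiv.swap 0 k, Fin.forall_fin_two.mpr ⟨?_, ?_⟩⟩
  · simpa [elimCols_empty] using hk
  · refine canElim_elimCols_of_forall_ne_mem A fun j hj => ?_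
    obtain ⟨t, rfl⟩ := (Equiv.swap 0 k).surjective j
    have ht : t ≠ 1 := fun ht => hj (congrArg _ ht)
    have ht_lt : t < 1 := by omega
    exact mem_image_of_mem _ ((mem_filter_univ t).mpr ht_lt)

theorem exists_opposite_rows {A : Matrix (Fin m) (Fin 2) ℝ} (h₀ : ¬ CanElim A 0)
    (h₁ : ¬ CanElim A 1) :
    ∃ p q, 0 < A p 0 ∧ A q 0 < 0 ∧ A p 1 * A q 1 < 0 := by
  obtain ⟨⟨p, hp₀, j, hj, hp₁⟩, q, hq₀, k, hk, hq₁⟩ := not_canElim_iff.mp h₀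
  obtain ⟨rfl, rfl⟩ : j = 1 ∧ k = 1 := by omega
  obtain ⟨⟨r, hr₁, j, hj, hr₀⟩, s, hs₁, k, hk, hs₀⟩ := not_canElim_iff.mp h₁
  obtain ⟨rfl, rfl⟩ : j = 0 ∧ k = 0 := by omega
  rcases hr₀.lt_or_gt with hr₀ | hr₀ <;> rcases hs₀.lt_or_gt with hs₀ | hs₀
  · rcases hp₁.lt_or_gt with hp₁ | hp₁
    · exact ⟨p, r, hp₀, hr₀, mul_neg_of_neg_of_pos hp₁ hr₁⟩
    · exact ⟨p, s, hp₀, hs₀, mul_neg_of_pos_of_neg hp₁ hs₁⟩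
  · exact ⟨s, r, hs₀, hr₀, mul_neg_of_neg_of_pos hs₁ hr₁⟩
  · exact ⟨r, s, hr₀, hs₀, mul_neg_of_pos_of_neg hr₁ hs₁⟩
  · rcases hq₁.lt_or_gt with hq₁ | hq₁
    · exact ⟨r, q, hr₀, hq₀, mul_neg_of_pos_of_neg hr₁ hq₁⟩
    · exact ⟨s, q, hs₀, hq₀, mul_neg_of_neg_of_pos hs₁ hq₁⟩

end Elimination

section SolutionGraph

variable {d m : ℕ} {ι : Type} [Fintype ι] {A : Matrix (Fin m) ι ℝ} {x y : ι → ℤ}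

theorem not_solConnected_of_column_cut [DecidableEq ι] {b : Fin m → ℝ} (k : ι) (c : ℤ)
    (hx : Feas d A b x) (hy : Feas d A b y) (hxc : x k ≤ c) (hyc : c < y k)
    (hcut : ∀ u v, Feas d A b u → Feas d A b v → u k ≤ c → c < v k → ∃ j ≠ k, u j ≠ v j) :
    ¬ SolConnected d A b := by
  intro hconn
  have reachable_le : ∀ z, Relation.ReflTransGen (SolStep d A b) x z → z k ≤ c := by
    intro z hz
    induction hz with
    | refl => exact hxc
    | @tail u v _ hstep hu =>
      obtain ⟨hfu, hfv, hdist⟩ := hstep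
      by_contra! hv
      obtain ⟨j, hjk, hj⟩ := hcut u v hfu hfv hu hv
      exact hj (eq_of_hammingDist_eq_one hdist (hu.trans_lt hv).ne hjk)
  exact (reachable_le y (hconn x y hx hy)).not_gt hyc

/-- The largest right-hand side `b` for which both `x` and `y` satisfy `A x ≥ b`. -/
noncomputable def jointBound (A : Matrix (Fin m) ι ℝ) (x y : ι → ℤ) (i : Fin m) : ℝ :=
  min (∑ j, A i j * (x j : ℝ)) (∑ j, A i j * (y j : ℝ))

theorem feas_jointBound_left (hx : InD d x) : Feas d A (jointBound A x y) x :=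
  ⟨hx, fun _ => min_le_left _ _⟩

theorem feas_jointBound_right (hy : InD d y) : Feas d A (jointBound A x y) y :=
  ⟨hy, fun _ => min_le_right _ _⟩

theorem not_feas_jointBound_of_row {u : ι → ℤ} (i : Fin m) (w : ι → ℤ)
    (hwx : ∑ j, A i j * (w j : ℝ) < ∑ j, A i j * (x j : ℝ))
    (hwy : ∑ j, A i j * (w j : ℝ) < ∑ j, A i j * (y j : ℝ))
    (huw : ∀ j, A i j * (u j : ℝ) ≤ A i j * (w j : ℝ)) :
    ¬ Feas d A (jointBound A x y) u := fun hu =>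
  ((sum_le_sum fun j _ => huw j).trans_lt (lt_min hwx hwy)).not_ge (hu.2 i)

end SolutionGraph

section TwoColumns

variable {d m : ℕ} {A : Matrix (Fin m) (Fin 2) ℝ} {p q : Fin m}

theorem inD_pair {a b : ℤ} (ha : 0 ≤ a ∧ a ≤ d) (hb : 0 ≤ b ∧ b ≤ d) : InD d ![a, b] :=
  Fin.forall_fin_two.mpr ⟨ha, hb⟩

theorem not_solConnected_jointBound_antidiagonal (hd : 0 < d) (hp₀ : 0 < A p 0) (hp₁ : 0 < A p 1)
    (hq₀ : A q 0 < 0) (hq₁ : A q 1 < 0) :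
    ¬ SolConnected d A (jointBound A ![0, 1] ![1, 0]) := by
  refine not_solConnected_of_column_cut 0 0
    (feas_jointBound_left (inD_pair (by omega) (by omega)))
    (feas_jointBound_right (inD_pair (by omega) (by omega))) le_rfl one_pos
    fun u v hu hv hu₀ hv₀ => ⟨1, one_ne_zero, fun huv => ?_⟩
  rcases le_or_gt (u 1) 0 with hu₁ | hu₁
  · refine not_feas_jointBound_of_row p ![0, 0] ?_ ?_ (Fin.forall_fin_two.mpr ⟨?_, ?_⟩) hu
    · simpa
    · simpa
    · exact mul_le_mul_of_nonneg_left (Int.cast_le.mpr hu₀) hp₀.le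
    · exact mul_le_mul_of_nonneg_left (Int.cast_le.mpr hu₁) hp₁.le
  · have hv₁ : 1 ≤ v 1 := huv ▸ hu₁
    refine not_feas_jointBound_of_row q ![1, 1] ?_ ?_ (Fin.forall_fin_two.mpr ⟨?_, ?_⟩) hv
    · simpa
    · simpa
    · exact mul_le_mul_of_nonpos_left (Int.cast_le.mpr hv₀) hq₀.le
    · exact mul_le_mul_of_nonpos_left (Int.cast_le.mpr hv₁) hq₁.le

theorem not_solConnected_jointBound_diagonal (hd : 0 < d) (hp₀ : 0 < A p 0) (hp₁ : A p 1 < 0)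
    (hq₀ : A q 0 < 0) (hq₁ : 0 < A q 1) :
    ¬ SolConnected d A (jointBound A ![0, 0] ![1, 1]) := by
  refine not_solConnected_of_column_cut 0 0
    (feas_jointBound_left (inD_pair (by omega) (by omega)))
    (feas_jointBound_right (inD_pair (by omega) (by omega))) le_rfl one_pos
    fun u v hu hv hu₀ hv₀ => ⟨1, one_ne_zero, fun huv => ?_⟩
  rcases le_or_gt (v 1) 0 with hv₁ | hv₁
  · refine not_feas_jointBound_of_row q ![1, 0] ?_ ?_ (Fin.forall_fin_two.mpr ⟨?_, ?_⟩) hv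
    · simpa
    · simpa
    · exact mul_le_mul_of_nonpos_left (Int.cast_le.mpr hv₀) hq₀.le
    · exact mul_le_mul_of_nonneg_left (Int.cast_le.mpr hv₁) hq₁.le
  · have hu₁ : 1 ≤ u 1 := huv ▸ hv₁
    refine not_feas_jointBound_of_row p ![0, 1] ?_ ?_ (Fin.forall_fin_two.mpr ⟨?_, ?_⟩) hu
    · simpa
    · simpa
    · exact mul_le_mul_of_nonneg_left (Int.cast_le.mpr hu₀) hp₀.le
    · exact mul_le_mul_of_nonpos_left (Int.cast_le.mpr hu₁) hp₁.le

end TwoColumns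

theorem stmt7 (d : ℕ) (hd : 0 < d) (m : ℕ) (A : Matrix (Fin m) (Fin 2) ℝ)
    (h : ¬ HasEO A) :
    ∃ b : Fin m → ℝ, ¬ SolConnected d A b := by
  have h₀ : ¬ CanElim A 0 := fun hc => h (hasEO_of_canElim hc)
  have h₁ : ¬ CanElim A 1 := fun hc => h (hasEO_of_canElim hc)
  obtain ⟨p, q, hp₀, hq₀, hpq⟩ := exists_opposite_rows h₀ h₁
  rcases mul_neg_iff.mp hpq with ⟨hp₁, hq₁⟩ | ⟨hp₁, hq₁⟩
  · exact ⟨_, not_solConnected_jointBound_antidiagonal hd hp₀ hp₁ hq₀ hq₁⟩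
  · exact ⟨_, not_solConnected_jointBound_diagonal hd hp₀ hp₁ hq₀ hq₁⟩
end

section
/- Let A ∈ ℝ^{m×n} with m ≤ 3 or n ≤ 2. If for every b ∈ ℝ^m the solution graph of the integer linear system (A,b) over D = {0,...,d} is connected, then A has an elimination ordering. -/
open Finset

/-!
Call two rows opposite at a column if their entries there have strictly opposite signs. Negating
columns corresponds to reflecting coordinates `x j ↦ d - x j`, so it preserves connectedness for all
right-hand sides. Signs can then be normalised so that every solution `x` of a system solved by `0`
and by a small 0/1 vector `v` satisfies `x p ≠ 0` exactly when `x j ≠ 0` for some `j` in a set not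
containing `p`; no single step leaves `x p = 0`, so `v` is cut off from `0` if `v p ≠ 0`. Hence two
rows are opposite at most once, and no three rows are cyclically opposite at three distinct columns.

If the greedy elimination gets stuck on a set `K` of columns, every row with two nonzero entries in
`K` has an opponent of the same kind at each of them, and these opponents are different. With three
rows this produces a cyclic triple; with two columns the two opponents of a row are opposite to each
other twice.
-/

section Opposite

variable {κ ι : Type*} {A : Matrix κ ι ℝ} {i k l : κ} {j : ι}

/-- Rows `i` and `k` have entries of strictly opposite signs in column `j`. -/
def OppositeAt (A : Matrix κ ι ℝ) (i k : κ) (j : ι) : Prop :=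
  A i j * A k j < 0

/-- Any two rows are opposite in at most one column: the condition that two rows must satisfy for
the solution graphs to be connected. -/
def OppositeAtMostOnce (A : Matrix κ ι ℝ) : Prop :=
  ∀ ⦃i k : κ⦄ ⦃j j' : ι⦄, OppositeAt A i k j → OppositeAt A i k j' → j = j'

/-- No three rows `r 0`, `r 1`, `r 2` are cyclically opposite, `r s` to `r (s + 1)`, in three
distinct columns `c s`: the condition that three rows must satisfy for the solution graphs to be
connected. Addition in `Fin 3` wraps around. -/
def NoOppositeTriangle (A : Matrix κ ι ℝ) : Prop :=
  ∀ ⦃r : Fin 3 → κ⦄ ⦃c : Fin 3 → ι⦄, Function.Injective c →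
    ¬ ∀ s, OppositeAt A (r s) (r (s + 1)) (c s)

theorem OppositeAt.symm (h : OppositeAt A i k j) : OppositeAt A k i j := by
  rwa [OppositeAt, mul_comm]

theorem OppositeAt.ne (h : OppositeAt A i k j) : i ≠ k := by
  rintro rfl
  exact (mul_self_nonneg _).not_gt h

theorem OppositeAt.pos_of_nonpos (h : OppositeAt A i k j) (hk : A k j ≤ 0) : 0 < A i j :=
  pos_of_mul_neg_left h hk

theorem OppositeAt.neg_of_nonpos (h : OppositeAt A i k j) (hk : A k j ≤ 0) : A k j < 0 :=
  (pos_iff_neg_of_mul_neg h).1 (h.pos_of_nonpos hk)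

theorem OppositeAt.oppositeAt_or (h : OppositeAt A i k j) (hl : A l j ≠ 0) :
    OppositeAt A l i j ∨ OppositeAt A l k j := by
  by_contra! hcon
  simp only [OppositeAt, not_lt] at h hcon
  nlinarith [mul_nonneg hcon.1 hcon.2, sq_pos_of_ne_zero hl]

theorem OppositeAtMostOnce.eq_zero_of_triangle (hA : OppositeAtMostOnce A) {r : Fin 3 → κ}
    {c : Fin 3 → ι} (hc : Function.Injective c)
    (hr : ∀ s, OppositeAt A (r s) (r (s + 1)) (c s)) (s : Fin 3) : A (r s) (c (s + 1)) = 0 := by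
  have rotate : s + 1 + 1 + 1 = s := by omega
  by_contra hne
  rcases (hr (s + 1)).oppositeAt_or hne with h | h
  · have := hc (hA h (hr s))
    omega
  · have := hc (hA h.symm (rotate ▸ hr (s + 1 + 1)))
    omega

end Opposite

section NegCols

variable {κ ι : Type*}

open Classical in
/-- The matrix obtained from `A` by negating the columns in `S`, which normalises signs. -/
noncomputable def negCols (A : Matrix κ ι ℝ) (S : Set ι) : Matrix κ ι ℝ :=
  fun i j => if j ∈ S then -A i j else A i j

theorem oppositeAt_negCols {A : Matrix κ ι ℝ} {S : Set ι} {i k : κ} {j : ι} :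
    OppositeAt (negCols A S) i k j ↔ OppositeAt A i k j := by
  unfold OppositeAt negCols
  split_ifs <;> simp

theorem exists_negCols_nonpos (A : Matrix κ ι ℝ) (rows : ι → Set κ)
    (h : ∀ j, ∀ i ∈ rows j, ∀ k ∈ rows j, ¬ OppositeAt A i k j) :
    ∃ S, ∀ j, ∀ i ∈ rows j, negCols A S i j ≤ 0 := by
  refine ⟨{j | ∃ k ∈ rows j, 0 < A k j}, fun j i hi => ?_⟩
  by_cases hj : ∃ k ∈ rows j, 0 < A k j
  · obtain ⟨k, hk, hpos⟩ := id hj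
    have : 0 ≤ A i j := nonneg_of_mul_nonneg_right (not_lt.1 (h j k hk i hi)) hpos
    simpa [negCols, hj]
  · have : A i j ≤ 0 := not_lt.1 fun hpos => hj ⟨i, hi, hpos⟩
    simpa [negCols, hj]

open Classical in
/-- The reflection of the coordinates in `S` of the box `{0,…,d}^ι`, the counterpart of `negCols`
on points. -/
noncomputable def reflect (d : ℕ) (S : Set ι) (x : ι → ℤ) : ι → ℤ :=
  fun j => if j ∈ S then d - x j else x j

variable {d : ℕ} {S : Set ι}

theorem reflect_reflect (x : ι → ℤ) : reflect d S (reflect d S x) = x := by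
  funext j
  unfold reflect
  split_ifs <;> ring

theorem sum_mul_reflect [Fintype ι] (A : Matrix κ ι ℝ) (S : Set ι) (i : κ) (x : ι → ℤ) :
    ∑ j, A i j * (reflect d S x j : ℝ) =
      ∑ j, A i j * (reflect d S 0 j : ℝ) + ∑ j, negCols A S i j * (x j : ℝ) := by
  rw [← Finset.sum_add_distrib]
  refine Finset.sum_congr rfl fun j _ => ?_
  unfold reflect negCols
  split_ifs <;> push_cast [Pi.zero_apply] <;> ring

theorem hammingDist_reflect [Fintype ι] (x y : ι → ℤ) :
    hammingDist (reflect d S x) (reflect d S y) = hammingDist x y := by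
  classical
  refine hammingDist_comp (fun j (a : ℤ) => if j ∈ S then d - a else a) fun j a b hab => ?_
  dsimp only at hab
  split_ifs at hab <;> omega

end NegCols

section Coordinates

variable {ι : Type*} [Fintype ι]

theorem sum_mul_sum_single [DecidableEq ι] (a : ι → ℝ) (s : Finset ι) :
    ∑ j, a j * ((∑ p ∈ s, Pi.single p 1 : ι → ℤ) j : ℝ) = ∑ p ∈ s, a p := by
  simp [Finset.sum_apply, Finset.sum_pi_single]

theorem sum_mul_le_of_forall_mul_nonpos {a : ι → ℝ} {x : ι → ℤ} (hx : 0 ≤ x)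
    (hax : ∀ j, a j * x j ≤ 0) {q : ι} (hq : x q ≠ 0) : ∑ j, a j * (x j : ℝ) ≤ a q := by
  have one_le : (1 : ℝ) ≤ x q := mod_cast (hx q).lt_of_ne' hq
  have sum_le : ∑ j, a j * (x j : ℝ) ≤ a q * x q := by
    classical
    rw [← add_sum_erase univ _ (mem_univ q)]
    exact add_le_of_nonpos_right (sum_nonpos fun j _ => hax j)
  nlinarith [hax q]

theorem exists_mem_ne_zero_of_lt_sum {a : ι → ℝ} {x : ι → ℤ} (hx : 0 ≤ x) {T : Set ι}
    (ha : ∀ j ∉ T, a j ≤ 0) {q : ι} (hlt : a q < ∑ j, a j * (x j : ℝ)) (hq : x q ≠ 0) :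
    ∃ j ∈ T, x j ≠ 0 := by
  by_contra! hT
  refine hlt.not_ge (sum_mul_le_of_forall_mul_nonpos hx (fun j => ?_) hq)
  by_cases hj : j ∈ T
  · simp [hT j hj]
  · exact mul_nonpos_of_nonpos_of_nonneg (ha j hj) (mod_cast hx j)

theorem eq_of_hammingDist_le_one {β : ι → Type*} [∀ j, DecidableEq (β j)] {x y : ∀ j, β j}
    (h : hammingDist x y ≤ 1) {j j' : ι} (hj : x j ≠ y j) (hj' : x j' ≠ y j') : j = j' :=
  Finset.card_le_one.1 h j (by simpa using hj) j' (by simpa using hj')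

end Coordinates

section SolutionGraph

variable {d m : ℕ} {ι : Type} {A : Matrix (Fin m) ι ℝ} {b : Fin m → ℝ}

theorem inD_reflect {x : ι → ℤ} (hx : InD d x) (S : Set ι) : InD d (reflect d S x) := by
  intro j
  have := hx j
  unfold reflect
  split_ifs <;> omega

theorem inD_zero : InD d (0 : ι → ℤ) := fun _ => by simp

theorem inD_sum_single [DecidableEq ι] (hd : 0 < d) (s : Finset ι) :
    InD d (∑ p ∈ s, Pi.single p 1) := by
  intro j
  rw [Finset.sum_apply, Finset.sum_pi_single]
  split_ifs <;> omega

variable [Fintype ι]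

theorem feas_negCols_iff (S : Set ι) {x : ι → ℤ} :
    Feas d (negCols A S) b x ↔
      Feas d A (fun i => ∑ j, A i j * (reflect d S 0 j : ℝ) + b i) (reflect d S x) := by
  have inD_iff : InD d x ↔ InD d (reflect d S x) :=
    ⟨fun h => inD_reflect h S, fun h => reflect_reflect (d := d) (S := S) x ▸ inD_reflect h S⟩
  simp only [Feas, inD_iff, sum_mul_reflect A S _ x, add_le_add_iff_left]

variable [DecidableEq ι]

theorem solConnected_negCols (hA : ∀ b, SolConnected d A b) (S : Set ι) (b : Fin m → ℝ) :
    SolConnected d (negCols A S) b := by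
  intro x y hx hy
  have path := hA _ _ _ ((feas_negCols_iff S).1 hx) ((feas_negCols_iff S).1 hy)
  rw [← reflect_reflect (d := d) (S := S) x, ← reflect_reflect (d := d) (S := S) y]
  refine path.lift (reflect d S) fun u v ⟨hu, hv, huv⟩ => ⟨?_, ?_, ?_⟩
  · rwa [feas_negCols_iff, reflect_reflect]
  · rwa [feas_negCols_iff, reflect_reflect]
  · rwa [hammingDist_reflect]

theorem SolConnected.eq_zero_of_linked (hA : SolConnected d A b) (h0 : Feas d A b 0) {p : ι}
    {T : Set ι} (hp : p ∉ T) (linked : ∀ x, Feas d A b x → (x p ≠ 0 ↔ ∃ j ∈ T, x j ≠ 0))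
    {v : ι → ℤ} (hv : Feas d A b v) : v p = 0 := by
  induction hA 0 v h0 hv with
  | refl => rfl
  | @tail x y _ hxy ih =>
    obtain ⟨hx, hy, hdist⟩ := hxy
    by_contra hyp
    obtain ⟨j, hj, hyj⟩ := (linked y hy).1 hyp
    have hxj : x j = 0 := by
      by_contra hxj
      exact (linked x hx).2 ⟨j, hj, hxj⟩ (ih hx)
    have : p = j := eq_of_hammingDist_le_one hdist.le (by rw [ih hx]; exact Ne.symm hyp)
      (by rw [hxj]; exact hyj.symm)
    exact hp (this ▸ hj)

theorem not_linked_of_solConnected (hd : 0 < d) (hA : ∀ b, SolConnected d A b) {p : ι}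
    {s : Finset ι} (hps : p ∈ s) {T : Set ι} (hp : p ∉ T) :
    ¬ ∀ x : ι → ℤ, 0 ≤ x → (∀ i, min 0 (∑ q ∈ s, A i q) ≤ ∑ j, A i j * (x j : ℝ)) →
      (x p ≠ 0 ↔ ∃ j ∈ T, x j ≠ 0) := by
  intro linked
  have h0 : Feas d A (fun i => min 0 (∑ q ∈ s, A i q)) 0 := ⟨inD_zero, fun i => by simp⟩
  have hv : Feas d A (fun i => min 0 (∑ q ∈ s, A i q)) (∑ q ∈ s, Pi.single q 1) :=
    ⟨inD_sum_single hd s, fun i => by rw [sum_mul_sum_single]; exact min_le_right _ _⟩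
  have := (hA _).eq_zero_of_linked h0 hp (fun x hx => linked x (fun j => (hx.1 j).1) hx.2) hv
  simp [Finset.sum_apply, Finset.sum_pi_single, hps] at this

theorem not_solConnected_of_normalized_pair (hd : 0 < d) {i k : Fin m} {p : ι}
    (hip : 0 < A i p) (hkp : A k p < 0) (hi : ∀ j ≠ p, A i j ≤ 0)
    (hki : ∀ j, 0 < A k j → A i j < 0) (hk : ∃ q, 0 < A k q) : ¬ ∀ b, SolConnected d A b := by
  intro hA
  obtain ⟨q, hq, hmax⟩ := Set.exists_max_image {j | 0 < A k j} (A i) (Set.toFinite _) hk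
  have hpq : p ≠ q := by
    rintro rfl
    exact hkp.not_gt hq
  refine not_linked_of_solConnected hd hA (s := {p, q}) (mem_insert_self p _)
    (T := {j | 0 < A k j}) hkp.not_gt fun x hx hfeas => ?_
  simp only [sum_pair hpq] at hfeas
  constructor
  · have hlt : A k p < min 0 (A k p + A k q) := lt_min hkp (lt_add_of_pos_right _ hq)
    exact exists_mem_ne_zero_of_lt_sum hx (fun j hj => not_lt.1 hj) (hlt.trans_le (hfeas k))
  · rintro ⟨j, hj, hxj⟩
    have hlt : A i j < min 0 (A i p + A i q) :=
      lt_min (hki j hj) ((hmax j hj).trans_lt (lt_add_of_pos_left _ hip))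
    simpa using exists_mem_ne_zero_of_lt_sum hx (T := {p}) hi (hlt.trans_le (hfeas i)) hxj

theorem oppositeAtMostOnce_of_solConnected (hd : 0 < d) (hA : ∀ b, SolConnected d A b) :
    OppositeAtMostOnce A := by
  intro i k p q hp hq
  by_contra hpq
  let rows : ι → Set (Fin m) := fun j =>
    {r | r = i ∧ j ≠ p ∨ r = k ∧ (j = p ∨ ¬ OppositeAt A i k j)}
  have compatible : ∀ j, ∀ r ∈ rows j, ∀ s ∈ rows j, ¬ OppositeAt A r s j := by
    rintro j _ (⟨rfl, hj⟩ | ⟨rfl, hj⟩) _ (⟨rfl, hj'⟩ | ⟨rfl, hj'⟩) hopp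
    · exact hopp.ne rfl
    · exact hj'.elim hj (not_not_intro hopp)
    · exact hj.elim hj' (not_not_intro hopp.symm)
    · exact hopp.ne rfl
  obtain ⟨S, hS⟩ := exists_negCols_nonpos A rows compatible
  have hi : ∀ j ≠ p, negCols A S i j ≤ 0 := fun j hj => hS j i (Or.inl ⟨rfl, hj⟩)
  have hkp : negCols A S k p ≤ 0 := hS p k (Or.inr ⟨rfl, Or.inl rfl⟩)
  have hp' := oppositeAt_negCols (S := S).2 hp
  have hq' := oppositeAt_negCols (S := S).2 hq
  have hki : ∀ j, 0 < negCols A S k j → negCols A S i j < 0 := by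
    intro j hj
    have hjp : j ≠ p := by
      rintro rfl
      exact hkp.not_gt hj
    have hopp : OppositeAt A i k j := by
      by_contra hopp
      exact (hS j k (Or.inr ⟨rfl, Or.inr hopp⟩)).not_gt hj
    exact (oppositeAt_negCols.2 hopp).symm.neg_of_nonpos (hi j hjp)
  exact not_solConnected_of_normalized_pair hd (hp'.pos_of_nonpos hkp) (hp'.neg_of_nonpos hkp) hi
    hki ⟨q, hq'.symm.pos_of_nonpos (hi q (Ne.symm hpq))⟩ (solConnected_negCols hA S)

theorem not_solConnected_of_normalized_triangle (hd : 0 < d) {r : Fin 3 → Fin m} {c : Fin 3 → ι}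
    (hc : Function.Injective c) (hpos : ∀ s, 0 < A (r s) (c s))
    (hneg : ∀ s, A (r (s + 1)) (c s) < 0) (hzero : ∀ s, A (r s) (c (s + 1)) = 0)
    (hnonpos : ∀ s, ∀ j ≠ c s, A (r s) j ≤ 0) : ¬ ∀ b, SolConnected d A b := by
  intro hA
  refine not_linked_of_solConnected hd hA (s := univ.map ⟨c, hc⟩) (p := c 0) (T := {c 1})
    (by simp) (by simp [hc.eq_iff]) fun x hx hfeas => ?_
  have next : ∀ s, x (c s) ≠ 0 → x (c (s + 1)) ≠ 0 := by
    intro s hs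
    have hsum : ∑ q ∈ univ.map ⟨c, hc⟩, A (r (s + 1)) q =
        A (r (s + 1)) (c s) + A (r (s + 1)) (c (s + 1)) := by
      have := hzero (s + 1)
      rw [sum_map, Fin.sum_univ_three]
      fin_cases s <;> simp_all [add_comm]
    have hlt : A (r (s + 1)) (c s) < min 0 (∑ q ∈ univ.map ⟨c, hc⟩, A (r (s + 1)) q) :=
      lt_min (hneg s) (by linarith [hpos (s + 1)])
    simpa using exists_mem_ne_zero_of_lt_sum hx (T := {c (s + 1)}) (hnonpos (s + 1))
      (hlt.trans_le (hfeas _)) hs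
  simpa using ⟨next 0, fun h => next 2 (next 1 h)⟩

theorem noOppositeTriangle_of_solConnected (hd : 0 < d) (hA : ∀ b, SolConnected d A b) :
    NoOppositeTriangle A := by
  intro r c hc hr
  have once := oppositeAtMostOnce_of_solConnected hd hA
  let rows : ι → Set (Fin m) := fun j => {i | ∃ s, r s = i ∧ j ≠ c s}
  have compatible : ∀ j, ∀ i ∈ rows j, ∀ k ∈ rows j, ¬ OppositeAt A i k j := by
    rintro j _ ⟨s, rfl, hs⟩ _ ⟨t, rfl, ht⟩ hst
    obtain rfl | rfl | rfl : t = s ∨ t = s + 1 ∨ s = t + 1 := by omega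
    · exact hst.ne rfl
    · exact hs (once hst (hr s))
    · exact ht (once hst.symm (hr t))
  obtain ⟨S, hS⟩ := exists_negCols_nonpos A rows compatible
  have hnonpos : ∀ s, ∀ j ≠ c s, negCols A S (r s) j ≤ 0 := fun s j hj => hS j _ ⟨s, rfl, hj⟩
  have hnext : ∀ s, negCols A S (r (s + 1)) (c s) ≤ 0 := fun s =>
    hnonpos _ _ (hc.ne (by omega))
  have hr' := fun s => oppositeAt_negCols (S := S).2 (hr s)
  refine not_solConnected_of_normalized_triangle hd hc (fun s => (hr' s).pos_of_nonpos (hnext s))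
    (fun s => (hr' s).neg_of_nonpos (hnext s)) (fun s => ?_) hnonpos (solConnected_negCols hA S)
  simp [negCols, once.eq_zero_of_triangle hc hr s]

end SolutionGraph

section Stuck

variable {κ ι : Type*} {A : Matrix κ ι ℝ} {K : Set ι} {i : κ}

/-- Row `i` has at least two nonzero entries in the columns `K`, so that it can prevent the
elimination of a column in `K`. -/
def IsActive (A : Matrix κ ι ℝ) (K : Set ι) (i : κ) : Prop :=
  {j ∈ K | A i j ≠ 0}.Nontrivial

/-- No column in `K` can be eliminated once the columns outside `K` are zeroed out: each of them
has both a positive and a negative entry in an active row. -/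
def IsStuck (A : Matrix κ ι ℝ) (K : Set ι) : Prop :=
  ∀ j ∈ K, (∃ i, IsActive A K i ∧ 0 < A i j) ∧ ∃ i, IsActive A K i ∧ A i j < 0

namespace IsStuck

theorem exists_opponent (hK : IsStuck A K) {j : ι} (hj : j ∈ K) (hij : A i j ≠ 0) :
    ∃ k, IsActive A K k ∧ OppositeAt A i k j := by
  obtain ⟨⟨k, hk, hpos⟩, l, hl, hneg⟩ := hK j hj
  rcases hij.lt_or_gt with h | h
  · exact ⟨k, hk, mul_neg_of_neg_of_pos h hpos⟩
  · exact ⟨l, hl, mul_neg_of_pos_of_neg h hneg⟩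

theorem exists_two_opponents (hK : IsStuck A K) (hA : OppositeAtMostOnce A)
    (hi : IsActive A K i) :
    ∃ k k' j j', k ≠ k' ∧ j ≠ j' ∧ IsActive A K k ∧ IsActive A K k' ∧
      OppositeAt A i k j ∧ OppositeAt A i k' j' := by
  obtain ⟨j, ⟨hj, hij⟩, j', ⟨hj', hij'⟩, hne⟩ := hi
  obtain ⟨k, hk, hopp⟩ := hK.exists_opponent hj hij
  obtain ⟨k', hk', hopp'⟩ := hK.exists_opponent hj' hij'
  refine ⟨k, k', j, j', ?_, hne, hk, hk', hopp, hopp'⟩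
  rintro rfl
  exact hne (hA hopp hopp')

theorem exists_oppositeAt_of_card_le_three [Fintype κ] (hκ : Fintype.card κ ≤ 3)
    (hK : IsStuck A K) (hA : OppositeAtMostOnce A) (hi : IsActive A K i) {k k' : κ} (hik : i ≠ k)
    (hik' : i ≠ k') (hkk' : k ≠ k') :
    ∃ j j', j ≠ j' ∧ OppositeAt A i k j ∧ OppositeAt A i k' j' := by
  classical
  have covers : ∀ l, l ≠ i → l = k ∨ l = k' := by
    intro l hl
    by_contra! hcon
    have := card_le_univ {l, i, k, k'}
    rw [card_insert_of_notMem (by simp [hl, hcon]),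
      card_eq_three.2 ⟨i, k, k', hik, hik', hkk', rfl⟩] at this
    omega
  obtain ⟨l, l', j, j', hll', hjj', -, -, hl, hl'⟩ := hK.exists_two_opponents hA hi
  rcases covers l hl.ne.symm with rfl | rfl <;> rcases covers l' hl'.ne.symm with rfl | rfl
  · exact absurd rfl hll'
  · exact ⟨j, j', hjj', hl, hl'⟩
  · exact ⟨j', j, hjj'.symm, hl', hl⟩
  · exact absurd rfl hll'

theorem not_isActive_of_card_rows_le_three [Fintype κ] (hκ : Fintype.card κ ≤ 3)
    (hK : IsStuck A K) (once : OppositeAtMostOnce A) (noTriangle : NoOppositeTriangle A) :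
    ¬ IsActive A K i := by
  intro hi
  obtain ⟨k, l, p, q, hkl, hpq, hk, hl, hik, hil⟩ := hK.exists_two_opponents once hi
  obtain ⟨p', t, hpt, hki, hkl'⟩ :=
    hK.exists_oppositeAt_of_card_le_three hκ once hk hik.ne.symm hkl hil.ne
  obtain ⟨q', t', hqt, hli, hlk⟩ :=
    hK.exists_oppositeAt_of_card_le_three hκ once hl hil.ne.symm hkl.symm hik.ne
  obtain rfl : p = p' := once hik hki.symm
  obtain rfl : q = q' := once hil hli.symm
  obtain rfl : t = t' := once hkl' hlk.symm
  refine noTriangle (r := ![i, k, l]) (c := ![p, t, q]) ?_ ?_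
  · simp [Function.Injective, Fin.forall_fin_succ, hpq, hpt, hqt, hpq.symm, hpt.symm, hqt.symm]
  · intro s
    fin_cases s
    exacts [hik, hkl', hli]

theorem not_isActive_of_card_cols_le_two [Fintype ι] (hι : Fintype.card ι ≤ 2)
    (hK : IsStuck A K) (once : OppositeAtMostOnce A) : ¬ IsActive A K i := by
  classical
  have ne_zero : ∀ k, IsActive A K k → ∀ j, A k j ≠ 0 := by
    rintro k ⟨p, ⟨-, hp⟩, q, ⟨-, hq⟩, hpq⟩ j hj
    have three_cols : ({j, p, q} : Finset ι).card = 3 := card_eq_three.2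
      ⟨j, p, q, fun h => hp (h ▸ hj), fun h => hq (h ▸ hj), hpq, rfl⟩
    have := card_le_univ {j, p, q}
    omega
  intro hi
  obtain ⟨k, l, p, q, -, hpq, hk, hl, hik, hil⟩ := hK.exists_two_opponents once hi
  have hlk : OppositeAt A l k p := (hik.oppositeAt_or (ne_zero l hl p)).resolve_left
    fun h => hpq (once h.symm hil)
  have hkl : OppositeAt A k l q := (hil.oppositeAt_or (ne_zero k hk q)).resolve_left
    fun h => hpq (once hik h.symm)
  exact hpq (once hlk hkl.symm)

theorem exists_isActive (hK : IsStuck A K) (hne : K.Nonempty) : ∃ i, IsActive A K i := by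
  obtain ⟨j, hj⟩ := hne
  obtain ⟨⟨i, hi, -⟩, -⟩ := hK j hj
  exact ⟨i, hi⟩

end IsStuck

end Stuck

section GreedyElimination

/-- The sequence each of whose terms is selected by `pick` from the set of all earlier terms:
the order in which a greedy procedure eliminates columns. -/
def greedySeq {α : Type*} [DecidableEq α] (pick : Finset α → α) (t : ℕ) : α :=
  pick (univ.image fun s : Fin t => greedySeq pick s)
decreasing_by exact s.2

theorem exists_perm_of_forall_exists_notMem {n : ℕ} {P : Finset (Fin n) → Fin n → Prop}
    (h : ∀ J ≠ univ, ∃ j ∉ J, P J j) :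
    ∃ σ : Equiv.Perm (Fin n), ∀ t, P ((univ.filter (· < t)).image σ) (σ t) := by
  rcases isEmpty_or_nonempty (Fin n) with _ | _
  · exact ⟨1, isEmptyElim⟩
  choose! pick hpick using h
  let f : Fin n → Fin n := fun t => greedySeq pick t
  have earlier_eq : ∀ t : Fin n,
      (univ.image fun s : Fin t => greedySeq pick s) = (univ.filter (· < t)).image f := by
    intro t
    ext j
    simp only [mem_image, mem_filter, mem_univ, true_and]
    exact ⟨fun ⟨s, hs⟩ => ⟨⟨s, s.2.trans t.2⟩, s.2, hs⟩, fun ⟨s, hst, hs⟩ => ⟨⟨s, hst⟩, hs⟩⟩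
  have f_eq : ∀ t, f t = pick ((univ.filter (· < t)).image f) := fun t => by
    rw [← earlier_eq]
    exact greedySeq.eq_1 pick t
  have earlier_ne_univ : ∀ t, (univ.filter (· < t)).image f ≠ univ := by
    intro t heq
    have card_le : #(univ.image fun s : Fin t => greedySeq pick s) ≤ #(univ : Finset (Fin t)) :=
      card_image_le
    rw [earlier_eq, heq, Finset.card_fin, Finset.card_fin] at card_le
    exact t.2.not_ge card_le
  have f_spec : ∀ t, f t ∉ (univ.filter (· < t)).image f ∧
      P ((univ.filter (· < t)).image f) (f t) := fun t =>
    f_eq t ▸ hpick _ (earlier_ne_univ t)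
  have f_inj : Function.Injective f := .of_lt_imp_ne fun s t hst heq =>
    (f_spec t).1 (mem_image.2 ⟨s, by simpa using hst, heq⟩)
  exact ⟨Equiv.ofBijective f (Finite.injective_iff_bijective.1 f_inj), fun t => (f_spec t).2⟩

theorem isStuck_of_forall_not_canElim {m n : ℕ} {A : Matrix (Fin m) (Fin n) ℝ}
    {J : Finset (Fin n)} (h : ∀ j ∉ J, ¬ CanElim (elimCols A J) j) : IsStuck A {j | j ∉ J} := by
  intro j hj
  have active : ∀ i, elimCols A J i j ≠ 0 → (∃ j', j' ≠ j ∧ elimCols A J i j' ≠ 0) →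
      IsActive A {j | j ∉ J} i := by
    simp only [elimCols, ne_eq, ite_eq_left_iff, not_forall]
    rintro i ⟨-, hij⟩ ⟨j', hne, hj', hij'⟩
    exact ⟨j, ⟨hj, hij⟩, j', ⟨hj', hij'⟩, Ne.symm hne⟩
  have elimCols_eq : ∀ i, elimCols A J i j = A i j := fun i => if_neg hj
  have blocked := h j hj
  simp only [CanElim, not_or, not_forall, exists_prop] at blocked
  obtain ⟨⟨i, hi, hrow⟩, k, hk, hrow'⟩ := blocked
  exact ⟨⟨i, active i hi.ne' hrow, elimCols_eq i ▸ hi⟩, k, active k hk.ne hrow', elimCols_eq k ▸ hk⟩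

theorem hasEO_of_forall_not_isStuck {m n : ℕ} {A : Matrix (Fin m) (Fin n) ℝ}
    (h : ∀ K : Set (Fin n), K.Nonempty → ¬ IsStuck A K) : HasEO A := by
  refine exists_perm_of_forall_exists_notMem (P := fun J => CanElim (elimCols A J))
    fun J hJ => ?_
  by_contra! hcon
  exact h _ (by simpa [Set.Nonempty, Finset.eq_univ_iff_forall] using hJ)
    (isStuck_of_forall_not_canElim hcon)

end GreedyElimination

theorem stmt11 (d : ℕ) (hd : 0 < d) (m n : ℕ) (hmn : m ≤ 3 ∨ n ≤ 2)
    (A : Matrix (Fin m) (Fin n) ℝ)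
    (h : ∀ b : Fin m → ℝ, SolConnected d A b) :
    HasEO A := by
  have once := oppositeAtMostOnce_of_solConnected hd h
  have noTriangle := noOppositeTriangle_of_solConnected hd h
  refine hasEO_of_forall_not_isStuck fun K hne hK => ?_
  obtain ⟨i, hi⟩ := hK.exists_isActive hne
  rcases hmn with hm | hn
  · exact hK.not_isActive_of_card_rows_le_three (by simpa using hm) once noTriangle hi
  · exact hK.not_isActive_of_card_cols_le_two (by simpa using hn) once hi
end
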